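/- Let E : y² = x³ + Ax + B be an elliptic curve with A, B ∈ ℤ, let P = (a, b) be a non-torsion point of E(ℚ) with a, b ∈ ℤ, and let n ≥ 1 be an integer. Writing the x-coordinate of nP in lowest terms as A_n/D_n² with A_n ∈ ℤ and D_n ≥ 1, the denominator D_n² divides ψ_n(P)²; in particular D_n ≤ |ψ_n(P)|. -/

import Mathlib

/-- The short Weierstrass curve `y² = x³ + Ax + B` over `ℚ`, with `A, B ∈ ℤ`. -/
def shortCurveQ (A B : ℤ) : WeierstrassCurve.Affine ℚ :=
  { a₁ := 0, a₂ := 0, a₃ := 0, a₄ := (A : ℚ), a₆ := (B : ℚ) }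

/-- The short Weierstrass curve `y² = x³ + Ax + B` over `ℤ`. -/
def shortCurveZ (A B : ℤ) : WeierstrassCurve ℤ :=
  { a₁ := 0, a₂ := 0, a₃ := 0, a₄ := A, a₆ := B }

/-- The value `ψₙ(P)` of the `n`-th division polynomial at the integral point `P = (a, b)`. -/
noncomputable def psiShort (A B a b : ℤ) (n : ℤ) : ℤ :=
  ((shortCurveZ A B).Ψ n).evalEval a b

/-!
Strong induction on `k` gives the multiplication formula
`ψₖ₊₁(P) ψₖ₋₁(P) = (x(P) - x(kP)) ψₖ(P)²`, as long as `P, 2P, …, kP` are finite. The classical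
expressions for the sum, difference and product of `x(P + Q)` and `x(P - Q)` turn the recurrences
of the normalised elliptic divisibility sequence `ψ` into
`ψ₂ₘ₊₁(P) = (x(mP) - x((m + 1)P)) ψₘ(P)² ψₘ₊₁(P)²` and `ψ₂ₘ(P) = ψ₂(mP) ψₘ(P)⁴`, whose products
are the formula for `2m` and for `2m + 1`. Hence `x(nP) ψₙ(P)² = φₙ(P)` is an integer when `P` is
integral, so the denominator of `x(nP)` divides `ψₙ(P)²`. As the points `kP` with `1 < k < n` have
abscissas different from `x(P)`, the formula also shows inductively that `ψₙ(P) ≠ 0`, which gives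
the inequality.
-/

open WeierstrassCurve Affine Polynomial

section

variable {F : Type*} [Field F] {W : Affine F} {P Q : W.Point}

/-- The `x`-coordinate of a point on a Weierstrass curve, with junk value `1` at infinity. -/
noncomputable def xCoord (P : W.Point) : F :=
  P.xRep 0

/-- The value `ψₙ(P)` of the `n`-th division polynomial at a point, with junk value `0` at
infinity. -/
noncomputable def psiAt : W.Point → ℤ → F
  | 0, _ => 0
  | .some x y _, n => (W.ψ n).evalEval x y

theorem xCoord_some {x y : F} (h : W.Nonsingular x y) : xCoord (.some x y h) = x :=
  rfl

theorem psiAt_some {x y : F} (h : W.Nonsingular x y) (n : ℤ) :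
    psiAt (.some x y h) n = (W.ψ n).evalEval x y :=
  rfl

theorem psiAt_some_two {x y : F} (h : W.Nonsingular x y) :
    psiAt (.some x y h) 2 = y - W.negY x y := by
  rw [psiAt_some, ψ_two, ψ₂, evalEval_polynomialY, negY]
  ring

theorem psiAt_some_eq_evalEval_Ψ {x y : F} (h : W.Nonsingular x y) (n : ℤ) :
    psiAt (.some x y h) n = (W.Ψ n).evalEval x y := by
  have hmk := congr_arg (AdjoinRoot.evalEval h.1) (CoordinateRing.mk_ψ W n)
  exact (AdjoinRoot.evalEval_mk h.1 _).symm.trans (hmk.trans (AdjoinRoot.evalEval_mk h.1 _))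

@[simp]
theorem psiAt_zero_right (P : W.Point) : psiAt P 0 = 0 := by
  cases P with
  | zero => rfl
  | some x y h => simp [psiAt_some]

theorem ne_zero_of_psiAt_ne_zero {n : ℤ} (hP : psiAt P n ≠ 0) : P ≠ 0 := by
  rintro rfl
  exact hP rfl

theorem psiAt_one (hP : P ≠ 0) : psiAt P 1 = 1 := by
  cases P with
  | zero => exact absurd rfl hP
  | some x y h => simp [psiAt_some]

theorem psiAt_three_eq_eval_Ψ₃ (hP : P ≠ 0) : psiAt P 3 = W.Ψ₃.eval (xCoord P) := by
  cases P with
  | zero => exact absurd rfl hP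
  | some x y h => rw [psiAt_some, ψ_three, evalEval_C, xCoord_some]

theorem psiAt_four_eq_eval_preΨ₄_mul (P : W.Point) :
    psiAt P 4 = W.preΨ₄.eval (xCoord P) * psiAt P 2 := by
  cases P with
  | zero => simp [psiAt]
  | some x y h => rw [psiAt_some, psiAt_some, ψ_four, ψ_two, evalEval_mul, evalEval_C, xCoord_some]

theorem psiAt_odd (P : W.Point) (m : ℤ) : psiAt P (2 * m + 1) =
    psiAt P (m + 2) * psiAt P m ^ 3 - psiAt P (m - 1) * psiAt P (m + 1) ^ 3 := by
  cases P with
  | zero => simp [psiAt]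
  | some x y h => simp [psiAt_some, ψ_odd]

theorem psiAt_even (P : W.Point) (m : ℤ) : psiAt P (2 * m) * psiAt P 2 =
    psiAt P (m - 1) ^ 2 * psiAt P m * psiAt P (m + 2) -
      psiAt P (m - 2) * psiAt P m * psiAt P (m + 1) ^ 2 := by
  cases P with
  | zero => simp [psiAt]
  | some x y h => simpa [psiAt_some] using congr_arg (evalEval x y) (W.ψ_even m)

theorem psiAt_two_sq (hP : P ≠ 0) : psiAt P 2 ^ 2 =
    4 * xCoord P ^ 3 + W.b₂ * xCoord P ^ 2 + 2 * W.b₄ * xCoord P + W.b₆ := by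
  cases P with
  | zero => exact absurd rfl hP
  | some x y h =>
    rw [psiAt_some_two, xCoord_some, negY, b₂, b₄, b₆]
    linear_combination 4 * (equation_iff ..).mp h.1

theorem eval_preΨ₄_xCoord (hP : P ≠ 0) : W.preΨ₄.eval (xCoord P) =
    (6 * xCoord P ^ 2 + W.b₂ * xCoord P + W.b₄) * psiAt P 3 - psiAt P 2 ^ 4 := by
  rw [psiAt_three_eq_eval_Ψ₃ hP, preΨ₄, Ψ₃]
  simp only [eval_add, eval_mul, eval_C, eval_pow, eval_X, eval_ofNat]
  linear_combination xCoord P ^ 2 * W.b_relation + (psiAt P 2 ^ 2 + 4 * xCoord P ^ 3 +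
    W.b₂ * xCoord P ^ 2 + 2 * W.b₄ * xCoord P + W.b₆) * psiAt_two_sq hP

theorem xCoord_eq_xCoord_iff (hP : P ≠ 0) (hQ : Q ≠ 0) :
    xCoord P = xCoord Q ↔ P = Q ∨ P = -Q := by
  rw [← Point.xRep_eq_xRep_iff]
  match P, Q with
  | 0, _ => exact absurd rfl hP
  | .some .., 0 => exact absurd rfl hQ
  | .some .., .some .. => simp [xCoord]

variable [DecidableEq F]

theorem xCoord_sub_sub_xCoord_add (hP : P ≠ 0) (hQ : Q ≠ 0) (hx : xCoord P ≠ xCoord Q) :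
    (xCoord (P - Q) - xCoord (P + Q)) * (xCoord P - xCoord Q) ^ 2 = psiAt P 2 * psiAt Q 2 := by
  match P, Q with
  | 0, _ => exact absurd rfl hP
  | .some .., 0 => exact absurd rfl hQ
  | .some x₁ y₁ h₁, .some x₂ y₂ h₂ =>
    have hx₁₂ : x₁ ≠ x₂ := hx
    have hx₂₁ : x₂ - x₁ ≠ 0 := sub_ne_zero.mpr hx₁₂.symm
    simp only [sub_eq_add_neg (Point.some x₁ y₁ h₁), Point.neg_some, Point.add_of_X_ne hx₁₂,
      xCoord_some, psiAt_some_two, addX_eq_addX_negY_sub y₁ y₂ hx₁₂]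
    field_simp
    ring

theorem xCoord_add_add_xCoord_sub (hP : P ≠ 0) (hQ : Q ≠ 0) (hx : xCoord P ≠ xCoord Q) :
    (xCoord (P + Q) + xCoord (P - Q)) * (xCoord P - xCoord Q) ^ 2 =
      2 * xCoord P * xCoord Q * (xCoord P + xCoord Q) + W.b₂ * xCoord P * xCoord Q +
        W.b₄ * (xCoord P + xCoord Q) + W.b₆ := by
  match P, Q with
  | 0, _ => exact absurd rfl hP
  | .some .., 0 => exact absurd rfl hQ
  | .some x₁ y₁ h₁, .some x₂ y₂ h₂ =>
    have hx₁₂ : x₁ ≠ x₂ := hx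
    have hx₀ : x₁ - x₂ ≠ 0 := sub_ne_zero.mpr hx₁₂
    have e₁ := (equation_iff ..).mp h₁.1
    have e₂ := (equation_iff ..).mp h₂.1
    simp only [sub_eq_add_neg (Point.some x₁ y₁ h₁), Point.neg_some, Point.add_of_X_ne hx₁₂,
      xCoord_some, addX, slope_of_X_ne hx₁₂, negY, b₂, b₄, b₆]
    field_simp
    linear_combination 2 * e₁ + 2 * e₂

theorem xCoord_add_mul_xCoord_sub (hP : P ≠ 0) (hQ : Q ≠ 0) (hx : xCoord P ≠ xCoord Q) :
    xCoord (P + Q) * xCoord (P - Q) * (xCoord P - xCoord Q) ^ 2 =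
      xCoord P ^ 2 * xCoord Q ^ 2 - W.b₄ * xCoord P * xCoord Q -
        W.b₆ * (xCoord P + xCoord Q) - W.b₈ := by
  match P, Q with
  | 0, _ => exact absurd rfl hP
  | .some .., 0 => exact absurd rfl hQ
  | .some x₁ y₁ h₁, .some x₂ y₂ h₂ =>
    have hx₁₂ : x₁ ≠ x₂ := hx
    have hx₀ : x₁ - x₂ ≠ 0 := sub_ne_zero.mpr hx₁₂
    have e₁ := (equation_iff ..).mp h₁.1
    have e₂ := (equation_iff ..).mp h₂.1
    simp only [sub_eq_add_neg (Point.some x₁ y₁ h₁), Point.neg_some, Point.add_of_X_ne hx₁₂,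
      xCoord_some, addX, slope_of_X_ne hx₁₂, negY, b₄, b₆, b₈]
    field_simp
    clear * - e₁ e₂
    grind

theorem psiAt_two_ne_zero (hP : 2 • P ≠ 0) : psiAt P 2 ≠ 0 := by
  contrapose! hP
  cases P with
  | zero => exact nsmul_zero 2
  | some x y h =>
    rw [psiAt_some_two, sub_eq_zero] at hP
    rw [two_nsmul, Point.add_self_of_Y_eq hP]

theorem xCoord_two_nsmul (hP : psiAt P 2 ≠ 0) : xCoord (2 • P) * psiAt P 2 ^ 2 =
    xCoord P ^ 4 - W.b₄ * xCoord P ^ 2 - 2 * W.b₆ * xCoord P - W.b₈ := by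
  cases P with
  | zero => exact absurd rfl hP
  | some x y h =>
    rw [psiAt_some_two] at hP
    have e := (equation_iff ..).mp h.1
    simp only [two_nsmul, Point.add_self_of_Y_ne (sub_ne_zero.mp hP), xCoord_some, addX,
      slope_of_Y_ne rfl (sub_ne_zero.mp hP), psiAt_some_two]
    field_simp
    simp only [negY, b₄, b₆, b₈]
    clear * - e
    grind

theorem psiAt_two_nsmul_two (hP : psiAt P 2 ≠ 0) : psiAt (2 • P) 2 * psiAt P 2 =
    (6 * xCoord P ^ 2 + W.b₂ * xCoord P + W.b₄) * (xCoord P - xCoord (2 • P)) -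
      psiAt P 2 ^ 2 := by
  cases P with
  | zero => exact absurd rfl hP
  | some x y h =>
    rw [psiAt_some_two] at hP
    have slope_mul : W.slope x x y y * (y - W.negY x y) =
        3 * x ^ 2 + 2 * W.a₂ * x + W.a₄ - W.a₁ * y := by
      rw [slope_of_Y_ne rfl (sub_ne_zero.mp hP), div_mul_cancel₀ _ hP]
    simp only [two_nsmul, Point.add_self_of_Y_ne (sub_ne_zero.mp hP), xCoord_some,
      psiAt_some_two, addY, negAddY]
    generalize W.addX x x (W.slope x x y y) = x₂ at *
    simp only [negY, b₂, b₄] at *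
    linear_combination 2 * (x - x₂) * slope_mul

theorem xCoord_sub_xCoord_add_mul (hP : psiAt P 2 ≠ 0) (hQ : Q ≠ 0)
    (hx : xCoord P ≠ xCoord Q) :
    (xCoord P - xCoord (P + Q)) * (xCoord P - xCoord (P - Q)) * (xCoord P - xCoord Q) ^ 2 =
      (xCoord (2 • P) - xCoord Q) * psiAt P 2 ^ 2 := by
  have hP₀ := ne_zero_of_psiAt_ne_zero hP
  linear_combination xCoord_add_mul_xCoord_sub hP₀ hQ hx - xCoord_two_nsmul hP -
    xCoord P * xCoord_add_add_xCoord_sub hP₀ hQ hx + xCoord Q * psiAt_two_sq hP₀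

theorem psiAt_three (hP : psiAt P 2 ≠ 0) :
    psiAt P 3 = (xCoord P - xCoord (2 • P)) * psiAt P 2 ^ 2 := by
  have hP₀ := ne_zero_of_psiAt_ne_zero hP
  rw [psiAt_three_eq_eval_Ψ₃ hP₀, Ψ₃]
  simp only [eval_add, eval_mul, eval_C, eval_pow, eval_X, eval_ofNat]
  linear_combination xCoord_two_nsmul hP - xCoord P * psiAt_two_sq hP₀

theorem psiAt_four (hP : psiAt P 2 ≠ 0) : psiAt P 4 = psiAt (2 • P) 2 * psiAt P 2 ^ 4 := by
  have hP₀ := ne_zero_of_psiAt_ne_zero hP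
  rw [psiAt_four_eq_eval_preΨ₄_mul, eval_preΨ₄_xCoord hP₀, psiAt_three hP]
  linear_combination -psiAt P 2 ^ 3 * psiAt_two_nsmul_two hP

/-- The multiplication formula `x(kP) = φₖ(P) / ψₖ(P)²` with denominators cleared, where
`φₖ = x ψₖ² - ψₖ₊₁ ψₖ₋₁`. Meaningful only when `k • P` is not the point at infinity. -/
def XCoordFormula (P : W.Point) (k : ℤ) : Prop :=
  psiAt P (k + 1) * psiAt P (k - 1) = (xCoord P - xCoord (k • P)) * psiAt P k ^ 2

theorem xCoord_zsmul_ne {n : ℤ} (hP : ∀ k : ℤ, 1 ≤ k → k ≤ n → k • P ≠ 0) {i j : ℤ}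
    (hj : 1 ≤ j) (hji : j < i) (hij : i + j ≤ n) : xCoord (i • P) ≠ xCoord (j • P) := by
  rw [Ne, xCoord_eq_xCoord_iff (hP i (by lia) (by lia)) (hP j hj (by lia)), ← sub_eq_zero,
    ← add_eq_zero_iff_eq_neg, ← sub_smul, ← add_smul]
  exact not_or_intro (hP _ (by lia) (by lia)) (hP _ (by lia) hij)

theorem xCoord_zsmul_sub_sub_xCoord_zsmul_add {n : ℤ} (hP : ∀ k : ℤ, 1 ≤ k → k ≤ n → k • P ≠ 0)
    {i j : ℤ} (hj : 1 ≤ j) (hji : j < i) (hij : i + j ≤ n) :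
    (xCoord ((i - j) • P) - xCoord ((i + j) • P)) * (xCoord (i • P) - xCoord (j • P)) ^ 2 =
      psiAt (i • P) 2 * psiAt (j • P) 2 := by
  rw [sub_smul, add_smul]
  exact xCoord_sub_sub_xCoord_add (hP i (by lia) (by lia)) (hP j hj (by lia))
    (xCoord_zsmul_ne hP hj hji hij)

theorem psiAt_two_mul_add_one {m : ℤ} (h₀ : XCoordFormula P m) (h₁ : XCoordFormula P (m + 1)) :
    psiAt P (2 * m + 1) =
      (xCoord (m • P) - xCoord ((m + 1) • P)) * psiAt P m ^ 2 * psiAt P (m + 1) ^ 2 := by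
  rw [XCoordFormula, add_sub_cancel_right, add_assoc, one_add_one_eq_two] at h₁
  rw [XCoordFormula] at h₀
  linear_combination psiAt_odd P m + psiAt P m ^ 2 * h₁ - psiAt P (m + 1) ^ 2 * h₀

theorem psiAt_two_mul {m : ℤ} (hm : 2 ≤ m) (hP : ∀ k : ℤ, 1 ≤ k → k ≤ m + 1 → k • P ≠ 0)
    (h₀ : XCoordFormula P (m - 1)) (h₁ : XCoordFormula P m) (h₂ : XCoordFormula P (m + 1)) :
    psiAt P (2 * m) = psiAt (m • P) 2 * psiAt P m ^ 4 := by
  have hψ : psiAt P 2 ≠ 0 := psiAt_two_ne_zero (by exact_mod_cast hP 2 (by lia) (by lia))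
  have hx := xCoord_zsmul_sub_sub_xCoord_zsmul_add hP le_rfl (by lia : 1 < m) le_rfl
  rw [one_smul] at hx
  rw [XCoordFormula, sub_add_cancel, sub_sub, one_add_one_eq_two] at h₀
  rw [XCoordFormula] at h₁
  rw [XCoordFormula, add_sub_cancel_right, add_assoc, one_add_one_eq_two] at h₂
  refine mul_right_cancel₀ hψ ?_
  linear_combination psiAt_even P m + psiAt P (m - 1) ^ 2 * h₂ - psiAt P (m + 1) ^ 2 * h₀ +
    (xCoord ((m - 1) • P) - xCoord ((m + 1) • P)) *
      (psiAt P (m + 1) * psiAt P (m - 1) + (xCoord P - xCoord (m • P)) * psiAt P m ^ 2) * h₁ +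
    psiAt P m ^ 4 * hx

theorem XCoordFormula.two_mul {m : ℤ} (hm : 2 ≤ m)
    (hP : ∀ k : ℤ, 1 ≤ k → k ≤ 2 * m → k • P ≠ 0) (h₀ : XCoordFormula P (m - 1))
    (h₁ : XCoordFormula P m) (h₂ : XCoordFormula P (m + 1)) : XCoordFormula P (2 * m) := by
  have hψ := psiAt_two_mul hm (fun k hk hkm => hP k hk (by lia)) h₀ h₁ h₂
  have hψ_succ := psiAt_two_mul_add_one h₁ h₂
  have hψ_pred := psiAt_two_mul_add_one h₀ (by rwa [sub_add_cancel])
  rw [sub_add_cancel, show 2 * (m - 1) + 1 = 2 * m - 1 by ring] at hψ_pred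
  have two_nsmul_zsmul : 2 • m • P = (2 * m) • P := by rw [mul_smul, ofNat_zsmul]
  have hx := xCoord_sub_xCoord_add_mul
    (psiAt_two_ne_zero (two_nsmul_zsmul ▸ hP _ (by lia) le_rfl))
    (by simpa using hP 1 le_rfl (by lia) : P ≠ 0)
    (by simpa using xCoord_zsmul_ne hP le_rfl (by lia : 1 < m) (by lia))
  rw [← add_one_zsmul, sub_eq_add_neg (m • P), ← sub_one_zsmul, two_nsmul_zsmul] at hx
  rw [XCoordFormula] at h₁ ⊢
  rw [hψ, hψ_succ, hψ_pred]
  linear_combination (xCoord (m • P) - xCoord ((m + 1) • P)) *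
      (xCoord ((m - 1) • P) - xCoord (m • P)) * psiAt P m ^ 4 *
      (psiAt P (m + 1) * psiAt P (m - 1) + (xCoord P - xCoord (m • P)) * psiAt P m ^ 2) * h₁ -
    psiAt P m ^ 8 * hx

theorem XCoordFormula.two_mul_add_one {m : ℤ} (hm : 1 ≤ m)
    (hP : ∀ k : ℤ, 1 ≤ k → k ≤ 2 * m + 1 → k • P ≠ 0)
    (hψ : psiAt P (2 * m) = psiAt (m • P) 2 * psiAt P m ^ 4)
    (hψ_succ : psiAt P (2 * (m + 1)) = psiAt ((m + 1) • P) 2 * psiAt P (m + 1) ^ 4)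
    (h₀ : XCoordFormula P m) (h₁ : XCoordFormula P (m + 1)) : XCoordFormula P (2 * m + 1) := by
  have hx := xCoord_zsmul_sub_sub_xCoord_zsmul_add hP hm (lt_add_one m) (by lia)
  rw [add_sub_cancel_left, one_smul, show m + 1 + m = 2 * m + 1 by ring] at hx
  rw [XCoordFormula, add_sub_cancel_right, show 2 * m + 1 + 1 = 2 * (m + 1) by ring, hψ, hψ_succ,
    psiAt_two_mul_add_one h₀ h₁]
  linear_combination -psiAt P m ^ 4 * psiAt P (m + 1) ^ 4 * hx

theorem xCoordFormula_one (P : W.Point) : XCoordFormula P 1 := by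
  simp [XCoordFormula]

theorem xCoordFormula_two (hP : psiAt P 2 ≠ 0) : XCoordFormula P 2 := by
  have hP₀ := ne_zero_of_psiAt_ne_zero hP
  simpa [XCoordFormula, psiAt_one hP₀, ofNat_zsmul] using psiAt_three hP

theorem xCoordFormula_of_zsmul_ne_zero {n : ℤ} (hn : 1 ≤ n)
    (hP : ∀ k : ℤ, 1 ≤ k → k ≤ n → k • P ≠ 0) : XCoordFormula P n := by
  have ih (k : ℤ) (hk : 1 ≤ k) (hkn : k < n) : XCoordFormula P k :=
    xCoordFormula_of_zsmul_ne_zero hk fun j hj hjk => hP j hj (by lia)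
  obtain rfl | hn₁ := hn.eq_or_lt
  · exact xCoordFormula_one P
  have hP₀ : P ≠ 0 := by simpa using hP 1 le_rfl hn
  have hψ : psiAt P 2 ≠ 0 := psiAt_two_ne_zero (by exact_mod_cast hP 2 (by lia) hn₁)
  obtain ⟨m, rfl | rfl⟩ := n.even_or_odd'
  · obtain rfl | hm : m = 1 ∨ 2 ≤ m := by lia
    · exact xCoordFormula_two hψ
    · exact .two_mul hm hP (ih _ (by lia) (by lia)) (ih _ (by lia) (by lia))
        (ih _ (by lia) (by lia))
  · have hduplication (j : ℤ) (hj : 1 ≤ j) (hjm : j ≤ m + 1) :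
        psiAt P (2 * j) = psiAt (j • P) 2 * psiAt P j ^ 4 := by
      obtain rfl | ⟨rfl, rfl⟩ | ⟨hj, hm⟩ : j = 1 ∨ (j = 2 ∧ m = 1) ∨ (2 ≤ j ∧ 2 ≤ m) := by lia
      · simp [psiAt_one hP₀]
      · simpa [ofNat_zsmul] using psiAt_four hψ
      · exact psiAt_two_mul hj (fun k hk hkj => hP k hk (by lia)) (ih _ (by lia) (by lia))
          (ih _ (by lia) (by lia)) (ih _ (by lia) (by lia))
    exact .two_mul_add_one (by lia) hP (hduplication m (by lia) (by lia))
      (hduplication (m + 1) (by lia) le_rfl) (ih _ (by lia) (by lia)) (ih _ (by lia) (by lia))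
termination_by n.toNat
decreasing_by lia

theorem psiAt_ne_zero {n : ℤ} (hn : 1 ≤ n) (hP : ∀ k : ℤ, 1 ≤ k → k ≤ n → k • P ≠ 0) :
    psiAt P n ≠ 0 := by
  have hP₀ : P ≠ 0 := by simpa using hP 1 le_rfl hn
  induction n, hn using Int.leInduction with
  | base => simp [psiAt_one hP₀]
  | succ n hn ih =>
    have hψ : psiAt P n ≠ 0 := ih fun k hk hkn => hP k hk (by lia)
    obtain rfl | hn₁ := hn.eq_or_lt
    · exact psiAt_two_ne_zero (by exact_mod_cast hP 2 (by lia) (by lia))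
    · have hx : xCoord P ≠ xCoord (n • P) := by
        simpa using (xCoord_zsmul_ne hP le_rfl hn₁ le_rfl).symm
      refine left_ne_zero_of_mul (b := psiAt P (n - 1)) ?_
      rw [xCoordFormula_of_zsmul_ne_zero hn fun k hk hkn => hP k hk (by lia)]
      exact mul_ne_zero (sub_ne_zero.mpr hx) (pow_ne_zero 2 hψ)

end

section

variable {R K : Type*} [CommRing R] [Field K] [Algebra R K] {W : WeierstrassCurve R} {a b : R}

local notation "ι" => algebraMap R K

theorem algebraMap_evalEval_Ψ (h : (W.map ι).toAffine.Nonsingular (ι a) (ι b)) (n : ℤ) :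
    ι ((W.Ψ n).evalEval a b) = psiAt (.some _ _ h) n := by
  rw [psiAt_some_eq_evalEval_Ψ, map_Ψ, map_mapRingHom_evalEval]

variable [DecidableEq K]

theorem Ψ_evalEval_ne_zero (h : (W.map ι).toAffine.Nonsingular (ι a) (ι b)) {n : ℤ} (hn : 1 ≤ n)
    (hP : ∀ k : ℤ, 1 ≤ k → k ≤ n → k • Point.some _ _ h ≠ 0) : (W.Ψ n).evalEval a b ≠ 0 := by
  intro hΨ
  apply psiAt_ne_zero hn hP
  rw [← algebraMap_evalEval_Ψ, hΨ, map_zero]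

theorem dvd_Ψ_evalEval_sq [DecompositionMonoid R] [FaithfulSMul R K]
    (h : (W.map ι).toAffine.Nonsingular (ι a) (ι b)) {n : ℤ} (hn : 1 ≤ n)
    (hP : ∀ k : ℤ, 1 ≤ k → k ≤ n → k • Point.some _ _ h ≠ 0) {u v : R} (huv : IsRelPrime v u)
    (hx : xCoord (n • Point.some _ _ h) * ι v = ι u) : v ∣ (W.Ψ n).evalEval a b ^ 2 := by
  have hφ : u * (W.Ψ n).evalEval a b ^ 2 = v * (a * (W.Ψ n).evalEval a b ^ 2 -
      (W.Ψ (n + 1)).evalEval a b * (W.Ψ (n - 1)).evalEval a b) := by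
    apply FaithfulSMul.algebraMap_injective R K
    simp only [map_mul, map_sub, map_pow, algebraMap_evalEval_Ψ h]
    rw [xCoordFormula_of_zsmul_ne_zero hn hP, xCoord_some, ← hx]
    ring
  exact huv.dvd_of_dvd_mul_left ⟨_, hφ⟩

end

theorem stmt16_general (W : WeierstrassCurve ℤ) {a b : ℤ}
    (h : (W.map (algebraMap ℤ ℚ)).toAffine.Nonsingular (a : ℚ) (b : ℚ)) {n : ℤ} (hn : 1 ≤ n)
    (hP : ∀ k : ℤ, 1 ≤ k → k ≤ n → k • Point.some _ _ h ≠ 0) {x y : ℚ}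
    (h' : (W.map (algebraMap ℤ ℚ)).toAffine.Nonsingular x y)
    (hnP : n • Point.some _ _ h = Point.some _ _ h') {D : ℕ} (hden : x.den = D ^ 2) :
    (D : ℤ) ^ 2 ∣ (W.Ψ n).evalEval a b ^ 2 ∧ (D : ℤ) ≤ |(W.Ψ n).evalEval a b| := by
  have hcoprime : IsRelPrime ((D : ℤ) ^ 2) x.num := by
    rw [← Nat.cast_pow, ← hden]
    exact x.isCoprime_num_den.symm.isRelPrime
  have hx : xCoord (n • Point.some _ _ h) * algebraMap ℤ ℚ ((D : ℤ) ^ 2) =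
      algebraMap ℤ ℚ x.num := by
    rw [hnP, xCoord_some, ← Nat.cast_pow, ← hden]
    exact x.mul_den_eq_num
  have hdvd : (D : ℤ) ^ 2 ∣ (W.Ψ n).evalEval a b ^ 2 := dvd_Ψ_evalEval_sq h hn hP hcoprime hx
  have hΨ : (W.Ψ n).evalEval a b ≠ 0 := Ψ_evalEval_ne_zero h hn hP
  refine ⟨hdvd, Int.le_of_dvd (abs_pos.mpr hΨ) ?_⟩
  rwa [dvd_abs, ← Int.pow_dvd_pow_iff two_ne_zero]

theorem stmt16 (A B : ℤ) (hΔ : 4 * A ^ 3 + 27 * B ^ 2 ≠ 0)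
    (a b : ℤ) (h : (shortCurveQ A B).Nonsingular (a : ℚ) (b : ℚ))
    (hPtors : ∀ m : ℤ, 1 ≤ m →
      m • (WeierstrassCurve.Affine.Point.some _ _ h) ≠ 0)
    (n : ℤ) (hn : 1 ≤ n)
    (x y : ℚ) (h' : (shortCurveQ A B).Nonsingular x y)
    (hnP : n • (WeierstrassCurve.Affine.Point.some _ _ h) =
      WeierstrassCurve.Affine.Point.some _ _ h')
    (D : ℕ) (hD : 1 ≤ D) (hden : x.den = D ^ 2) :
    ((D : ℤ) ^ 2 ∣ psiShort A B a b n ^ 2) ∧ (D : ℤ) ≤ |psiShort A B a b n| :=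
  stmt16_general (shortCurveZ A B) h hn (fun m hm _ => hPtors m hm) h' hnP hden
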